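/- Fix λ > 0, set p_n = λ/n, and fix a > 0, C > 0. Let (k_n), (w_n) be sequences of positive reals with lim_{n→∞} (log n)/(w_n² k_n^{1/3}) = 0, and set t_n := w_n² k_n^{1/3}/(C a log(1/p_n)). Then there exist a constant C' > 0 and n₀ such that for all n ≥ n₀ and all integers m ≥ 1, the number of subgraphs of K_n that are m-cores (with parameters a, w_n, C, k_n) is at most (1/p_n)^{m·Ψ_n}, where Ψ_n := (1/log(1/p_n)) · [ (C'/t_n) log n + log(C' m/t_n²) ]. -/

import Mathlib

open scoped BigOperators Classical
open Finset Filter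

noncomputable section

/-- Number of edges of a finite simple graph. -/
def edgeCount {V : Type*} [Fintype V] (G : SimpleGraph V) : ℕ :=
  (Finset.univ.filter (fun e : Sym2 V => e ∈ G.edgeSet)).card

/-- Number of triangles (3-cliques) of a finite simple graph. -/
def triangleCount {V : Type*} [Fintype V] (G : SimpleGraph V) : ℕ :=
  (Finset.univ.filter (fun s : Finset V => G.IsNClique 3 s)).card

/-- Number of vertices lying in at least one triangle. -/
def vT {V : Type*} [Fintype V] (G : SimpleGraph V) : ℕ :=
  (Finset.univ.filter (fun v : V => ∃ u w : V, G.Adj v u ∧ G.Adj v w ∧ G.Adj u w)).card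

/-- Degree of a vertex. -/
def deg {V : Type*} [Fintype V] (G : SimpleGraph V) (v : V) : ℕ :=
  (Finset.univ.filter (fun u => G.Adj v u)).card

/-- Probability that the Erdős–Rényi random graph `G_{n,p}` equals the graph `G`. -/
def graphProb (n : ℕ) (p : ℝ) (G : SimpleGraph (Fin n)) : ℝ :=
  p ^ edgeCount G * (1 - p) ^ (n.choose 2 - edgeCount G)

/-- Probability of an event under the Erdős–Rényi measure. -/
def prob (n : ℕ) (p : ℝ) (A : Set (SimpleGraph (Fin n))) : ℝ :=
  ∑ G : SimpleGraph (Fin n), if G ∈ A then graphProb n p G else 0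

/-- Conditional probability `P(A | B)` (with the convention `0` when `P(B) = 0`). -/
def condProb (n : ℕ) (p : ℝ) (A B : Set (SimpleGraph (Fin n))) : ℝ :=
  prob n p (A ∩ B) / prob n p B

/-- Conditional expectation `E_G[f]` given that every edge of `G` is present. -/
def condExpect (n : ℕ) (p : ℝ) (G : SimpleGraph (Fin n)) (f : SimpleGraph (Fin n) → ℝ) : ℝ :=
  (∑ H : SimpleGraph (Fin n), if G ≤ H then graphProb n p H * f H else 0) /
    prob n p {H | G ≤ H}

/-- `E_G(T)`: conditional expectation of the number of triangles. -/
def condTri (n : ℕ) (p : ℝ) (G : SimpleGraph (Fin n)) : ℝ :=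
  condExpect n p G (fun H => (triangleCount H : ℝ))

/-- The variational quantity `Φ_{n,p,k}(a)`. -/
def Phi (n : ℕ) (p k a : ℝ) : ℝ :=
  sInf {x : ℝ | ∃ G : SimpleGraph (Fin n),
    a * k ≤ condTri n p G ∧ x = (edgeCount G : ℝ) * Real.log (1 / p)}

/-- A seed, with parameters `a, w, C, k` and edge probability `p`. -/
def IsSeed (n : ℕ) (p a w C k : ℝ) (G : SimpleGraph (Fin n)) : Prop :=
  (a - w) * k ≤ condTri n p G ∧
  (edgeCount G : ℝ) ≤ C * a * w⁻¹ * k ^ ((2 : ℝ) / 3) * Real.log (1 / p)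

/-- A core, with parameters `a, w, C, k` and edge probability `p`. -/
def IsCore (n : ℕ) (p a w C k : ℝ) (G : SimpleGraph (Fin n)) : Prop :=
  (a - 2 * w) * k ≤ condTri n p G ∧
  (edgeCount G : ℝ) ≤ C * a * w⁻¹ * k ^ ((2 : ℝ) / 3) * Real.log (1 / p) ∧
  ∀ e ∈ G.edgeSet,
    w ^ 2 * k ^ ((1 : ℝ) / 3) / (C * a * Real.log (1 / p)) ≤
      condTri n p G - condTri n p (G.deleteEdges {e})

/-- A `q`-basic graph. -/
def qBasic {V : Type*} [Fintype V] (q : ℕ) (G : SimpleGraph V) : Prop :=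
  vT G = q ∧ ∀ e ∈ G.edgeSet, vT (G.deleteEdges {e}) < q

/-- Containment of a `(δ, m)`-near-clique. -/
def containsNearClique {n : ℕ} (H : SimpleGraph (Fin n)) (δ m : ℝ) : Prop :=
  ∃ H' : SimpleGraph (Fin n), H' ≤ H ∧ 0 < edgeCount H' ∧
    ∀ v : Fin n, (∃ u, H'.Adj v u) →
      (1 - 4 * δ ^ ((1 : ℝ) / 2)) * (2 * m) ^ ((1 : ℝ) / 2) ≤ (deg H' v : ℝ)

/-- Partition function of the exponential random graph model tilted by `exp(b · V_T)`. -/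
def ergmZ (n : ℕ) (p b : ℝ) : ℝ :=
  ∑ G : SimpleGraph (Fin n), graphProb n p G * Real.exp (b * vT G)

/-- Probability of an event under the exponential random graph measure. -/
def ergmProb (n : ℕ) (p b : ℝ) (A : Set (SimpleGraph (Fin n))) : ℝ :=
  (∑ G : SimpleGraph (Fin n),
    if G ∈ A then graphProb n p G * Real.exp (b * vT G) else 0) / ergmZ n p b

/-- The edge finset of a graph. -/
def eF {V : Type*} [Fintype V] (G : SimpleGraph V) : Finset (Sym2 V) :=
  Finset.univ.filter (fun e : Sym2 V => e ∈ G.edgeSet)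

lemma mem_eF {V : Type*} [Fintype V] (G : SimpleGraph V) (e : Sym2 V) :
    e ∈ eF G ↔ e ∈ G.edgeSet := by simp [eF]

lemma edgeCount_eq {V : Type*} [Fintype V] (G : SimpleGraph V) : edgeCount G = (eF G).card := rfl

lemma eF_inj {V : Type*} [Fintype V] : Function.Injective (eF : SimpleGraph V → _) := by
  intro G H h
  apply SimpleGraph.edgeSet_injective
  ext e
  rw [← mem_eF, ← mem_eF, h]

lemma eF_subset {V : Type*} [Fintype V] {G H : SimpleGraph V} : eF G ⊆ eF H ↔ G ≤ H := by
  rw [← SimpleGraph.edgeSet_subset_edgeSet]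
  constructor
  · intro h e he
    exact (mem_eF _ _).1 (h ((mem_eF _ _).2 he))
  · intro h e he
    exact (mem_eF _ _).2 (h ((mem_eF _ _).1 he))

lemma edgeCount_mono {V : Type*} [Fintype V] {G H : SimpleGraph V} (h : G ≤ H) :
    edgeCount G ≤ edgeCount H := Finset.card_le_card (eF_subset.2 h)

lemma edgeCount_lt {V : Type*} [Fintype V] {G H : SimpleGraph V} (h : G < H) :
    edgeCount G < edgeCount H := by
  apply Finset.card_lt_card
  refine ⟨eF_subset.2 h.1, fun h' => h.2 (eF_subset.1 h')⟩

lemma edgeCount_delete {V : Type*} [Fintype V] {G : SimpleGraph V} {e : Sym2 V}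
    (he : e ∈ G.edgeSet) : edgeCount G = edgeCount (G.deleteEdges {e}) + 1 := by
  rw [edgeCount_eq, edgeCount_eq]
  have : eF (G.deleteEdges {e}) = (eF G).erase e := by
    ext x
    simp [mem_eF, SimpleGraph.edgeSet_deleteEdges, and_comm]
  rw [this, Finset.card_erase_add_one ((mem_eF _ _).2 he)]

lemma edgeCount_top (n : ℕ) : edgeCount (⊤ : SimpleGraph (Fin n)) = n.choose 2 := by
  have := SimpleGraph.card_edgeFinset_top_eq_card_choose_two (V := Fin n)
  rw [Fintype.card_fin] at this
  rw [← this, edgeCount_eq]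
  congr 1
  ext e
  simp [mem_eF]

lemma prob_ge (n : ℕ) (p : ℝ) (G : SimpleGraph (Fin n)) :
    prob n p {H | G ≤ H} = p ^ edgeCount G := by
  have key := Finset.sum_pow_mul_eq_add_pow p (1 - p)
    (eF (⊤ : SimpleGraph (Fin n)) \ eF G)
  have hs : eF G ⊆ eF (⊤ : SimpleGraph (Fin n)) := eF_subset.2 le_top
  have hc : (eF (⊤ : SimpleGraph (Fin n)) \ eF G).card + edgeCount G = n.choose 2 := by
    rw [← edgeCount_top, edgeCount_eq, edgeCount_eq]
    exact Finset.card_sdiff_add_card_eq_card hs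
  unfold prob
  simp only [Set.mem_ofPred_eq]
  rw [← Finset.sum_filter]
  have : ∑ H with G ≤ H, graphProb n p H =
      ∑ t ∈ (eF (⊤ : SimpleGraph (Fin n)) \ eF G).powerset, p ^ edgeCount G *
        (p ^ t.card * (1 - p) ^ ((eF (⊤ : SimpleGraph (Fin n)) \ eF G).card - t.card)) := by
    refine Finset.sum_bij (fun H _ => eF H \ eF G) ?_ ?_ ?_ ?_
    · intro H _
      rw [Finset.mem_powerset]
      exact Finset.sdiff_subset_sdiff (eF_subset.2 le_top) le_rfl
    · intro H hH H' hH' h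
      simp only [Finset.mem_filter, Finset.mem_univ, true_and] at hH hH'
      apply eF_inj
      rw [← Finset.sdiff_union_of_subset (eF_subset.2 hH), h,
        Finset.sdiff_union_of_subset (eF_subset.2 hH')]
    · intro t ht
      rw [Finset.mem_powerset] at ht
      have h1 : eF (SimpleGraph.fromEdgeSet ((t ∪ eF G : Finset _) : Set (Sym2 (Fin n)))) =
          t ∪ eF G := by
        ext x
        rw [mem_eF, SimpleGraph.edgeSet_fromEdgeSet]
        constructor
        · rintro ⟨h, -⟩
          exact h
        · intro h
          refine ⟨h, ?_⟩
          have : x ∈ eF (⊤ : SimpleGraph (Fin n)) := by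
            rcases Finset.mem_union.1 h with h | h
            · exact (Finset.mem_sdiff.1 (ht h)).1
            · exact hs h
          rw [mem_eF] at this
          simpa using this
      refine ⟨SimpleGraph.fromEdgeSet ((t ∪ eF G : Finset _) : Set (Sym2 (Fin n))), ?_, ?_⟩
      rotate_left
      · rw [h1, Finset.union_sdiff_right]
        apply Finset.sdiff_eq_self_of_disjoint
        exact Finset.disjoint_of_subset_left ht Finset.sdiff_disjoint
      · simp only [Finset.mem_filter, Finset.mem_univ, true_and]
        rw [← eF_subset, h1]
        exact Finset.subset_union_right
    · intro H hH
      simp only [Finset.mem_filter, Finset.mem_univ, true_and] at hH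
      have h1 : (eF H \ eF G).card + edgeCount G = edgeCount H := by
        rw [edgeCount_eq, edgeCount_eq]
        exact Finset.card_sdiff_add_card_eq_card (eF_subset.2 hH)
      unfold graphProb
      rw [← mul_assoc, ← pow_add]
      congr 2 <;> omega
  rw [this, ← Finset.mul_sum, key]
  simp

/-- The complete graph on `s`. -/
def KS {n : ℕ} (s : Finset (Fin n)) : SimpleGraph (Fin n) where
  Adj a b := a ≠ b ∧ a ∈ s ∧ b ∈ s
  symm := ⟨fun _ _ h => ⟨h.1.symm, h.2.2, h.2.1⟩⟩
  loopless := ⟨fun _ h => h.1 rfl⟩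

lemma isNClique_iff_KS {n : ℕ} (H : SimpleGraph (Fin n)) (s : Finset (Fin n)) :
    H.IsNClique 3 s ↔ s.card = 3 ∧ KS s ≤ H := by
  rw [SimpleGraph.isNClique_iff, and_comm]
  refine and_congr_right fun _ => ?_
  constructor
  · intro h a b hab
    exact h hab.2.1 hab.2.2 hab.1
  · intro h a ha b hb hab
    exact h ⟨hab, ha, hb⟩

lemma condTri_eq (n : ℕ) (p : ℝ) (G : SimpleGraph (Fin n)) :
    condTri n p G = ∑ s : Finset (Fin n), if s.card = 3 then
      p ^ edgeCount (G ⊔ KS s) / p ^ edgeCount G else 0 := by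
  unfold condTri condExpect
  rw [prob_ge]
  have h1 : ∀ H : SimpleGraph (Fin n), (triangleCount H : ℝ) =
      ∑ s : Finset (Fin n), if s.card = 3 ∧ KS s ≤ H then 1 else 0 := by
    intro H
    unfold triangleCount
    rw [Finset.sum_boole]
    simp only [isNClique_iff_KS]
  have h2 : (∑ H : SimpleGraph (Fin n), if G ≤ H then graphProb n p H * (triangleCount H : ℝ)
      else 0) = ∑ s : Finset (Fin n), if s.card = 3 then p ^ edgeCount (G ⊔ KS s) else 0 := by
    simp only [h1, Finset.mul_sum]
    have : ∀ H : SimpleGraph (Fin n), (if G ≤ H then ∑ s : Finset (Fin n),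
        graphProb n p H * (if s.card = 3 ∧ KS s ≤ H then (1:ℝ) else 0) else 0) =
        ∑ s : Finset (Fin n), if s.card = 3 then
          (if H ∈ {H | G ⊔ KS s ≤ H} then graphProb n p H else 0) else 0 := by
      intro H
      by_cases hG : G ≤ H
      · rw [if_pos hG]
        refine Finset.sum_congr rfl fun s _ => ?_
        by_cases h3 : s.card = 3 <;> by_cases h4 : KS s ≤ H <;> simp [hG, h3, h4]
      · rw [if_neg hG]
        symm
        refine Finset.sum_eq_zero fun s _ => ?_
        simp [hG]
    rw [Finset.sum_congr rfl (fun H _ => this H), Finset.sum_comm]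
    refine Finset.sum_congr rfl fun s _ => ?_
    by_cases h3 : s.card = 3
    · simp only [h3, if_true]
      exact prob_ge n p _
    · simp [h3]
  rw [h2, Finset.sum_div]
  refine Finset.sum_congr rfl fun s _ => ?_
  split_ifs <;> simp

lemma condTri_diff (n : ℕ) (p : ℝ) (hp : 0 < p) (hp1 : p ≤ 1) (G : SimpleGraph (Fin n))
    (u v : Fin n) (huv : G.Adj u v) :
    condTri n p G - condTri n p (G.deleteEdges {s(u, v)}) ≤ deg G u + n * p := by
  rw [condTri_eq, condTri_eq, ← Finset.sum_sub_distrib]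
  have he : s(u, v) ∈ G.edgeSet := huv
  have hne : u ≠ v := huv.ne
  have hp0 : ∀ k : ℕ, 0 < p ^ k := fun k => pow_pos hp k
  have hle : ∀ G H : SimpleGraph (Fin n), G ≤ H → p ^ edgeCount H / p ^ edgeCount G ≤ 1 := by
    intro G H h
    rw [div_le_one (hp0 _)]
    exact pow_le_pow_of_le_one hp.le hp1 (edgeCount_mono h)
  have hlt : ∀ G H : SimpleGraph (Fin n), G < H → p ^ edgeCount H / p ^ edgeCount G ≤ p := by
    intro G H h
    rw [div_le_iff₀ (hp0 _), ← pow_succ']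
    exact pow_le_pow_of_le_one hp.le hp1 (edgeCount_lt h)
  calc _ ≤ ∑ s : Finset (Fin n), ∑ x : Fin n, if s = {u, v, x} then
        (if G.Adj u x then (1:ℝ) else p) else 0 := by
        refine Finset.sum_le_sum fun s _ => ?_
        have hnn : ∀ x : Fin n, x ∈ Finset.univ → (0:ℝ) ≤ if s = {u, v, x} then
          (if G.Adj u x then (1:ℝ) else p) else 0 := by
          intro x _
          split_ifs <;> linarith
        by_cases h3 : s.card = 3
        · simp only [h3, if_true]
          by_cases hs : u ∈ s ∧ v ∈ s
          · obtain ⟨hu, hv⟩ := hs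
            have : ∃ x, x ∉ ({u, v} : Finset (Fin n)) ∧ s = {u, v, x} := by
              have hc : (({u, v} : Finset (Fin n))).card = 2 := Finset.card_pair hne
              have hsub : ({u, v} : Finset (Fin n)) ⊆ s := by
                intro y hy
                simp only [Finset.mem_insert, Finset.mem_singleton] at hy
                rcases hy with rfl | rfl <;> assumption
              have hd : (s \ {u, v}).card = 1 := by
                rw [Finset.card_sdiff_of_subset hsub]; omega
              obtain ⟨x, hx⟩ := Finset.card_eq_one.1 hd
              refine ⟨x, ?_, ?_⟩
              · have : x ∈ s \ {u, v} := by rw [hx]; simp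
                exact (Finset.mem_sdiff.1 this).2
              · rw [← Finset.sdiff_union_of_subset hsub, hx]
                ext y
                simp only [Finset.mem_union, Finset.mem_insert, Finset.mem_singleton]
                tauto
            obtain ⟨x, hx, hsx⟩ := this
            refine le_trans ?_ (Finset.single_le_sum hnn (Finset.mem_univ x))
            rw [if_pos hsx]
            have hpos : 0 ≤ p ^ edgeCount (G.deleteEdges {s(u, v)} ⊔ KS s) /
                p ^ edgeCount (G.deleteEdges {s(u, v)}) := (div_pos (hp0 _) (hp0 _)).le
            by_cases hux : G.Adj u x
            · rw [if_pos hux]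
              have := hle G (G ⊔ KS s) le_sup_left
              linarith
            · rw [if_neg hux]
              have hl : G < G ⊔ KS s := by
                refine lt_of_le_of_ne le_sup_left ?_
                intro h
                apply hux
                rw [h]
                refine Or.inr ⟨?_, hu, ?_⟩
                · rintro rfl
                  simp at hx
                · rw [hsx]; simp
              have := hlt _ _ hl
              linarith
          · refine le_trans (le_of_eq ?_) (Finset.sum_nonneg hnn)
            have h1 : (G ⊔ KS s).deleteEdges {s(u, v)} = G.deleteEdges {s(u, v)} ⊔ KS s := by
              ext y z
              simp only [SimpleGraph.deleteEdges_adj, SimpleGraph.sup_adj, Set.mem_singleton_iff]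
              constructor
              · rintro ⟨h | h, h'⟩
                · exact Or.inl ⟨h, h'⟩
                · exact Or.inr h
              · rintro (⟨h, h'⟩ | h)
                · exact ⟨Or.inl h, h'⟩
                · refine ⟨Or.inr h, ?_⟩
                  intro h'
                  apply hs
                  obtain ⟨-, hy, hz⟩ := h
                  rcases Sym2.eq_iff.1 h' with ⟨rfl, rfl⟩ | ⟨rfl, rfl⟩
                  · exact ⟨hy, hz⟩
                  · exact ⟨hz, hy⟩
            have h2 : s(u, v) ∈ (G ⊔ KS s).edgeSet := Or.inl huv
            rw [edgeCount_delete he, edgeCount_delete h2, h1, pow_succ, pow_succ,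
              mul_div_mul_right _ _ hp.ne', sub_self]
        · simp only [h3, if_false, sub_self]
          exact Finset.sum_nonneg hnn
    _ = ∑ x : Fin n, (if G.Adj u x then (1:ℝ) else p) := by
        rw [Finset.sum_comm]
        refine Finset.sum_congr rfl fun x _ => ?_
        simp
    _ ≤ ∑ x : Fin n, ((if G.Adj u x then (1:ℝ) else 0) + p) := by
        refine Finset.sum_le_sum fun x _ => ?_
        split_ifs <;> linarith
    _ = deg G u + n * p := by
        rw [Finset.sum_add_distrib, Finset.sum_boole]
        simp [deg]

lemma sum_deg {n : ℕ} (G : SimpleGraph (Fin n)) : ∑ v, deg G v = 2 * edgeCount G := by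
  have h := SimpleGraph.sum_degrees_eq_twice_card_edges G
  have h1 : edgeCount G = G.edgeFinset.card := by
    rw [edgeCount_eq]; congr 1; ext e; simp [mem_eF]
  rw [h1, ← h]
  refine Finset.sum_congr rfl fun v _ => ?_
  unfold deg
  rw [← SimpleGraph.card_neighborFinset_eq_degree]
  congr 1; ext e; simp

/-- Combinatorial covering: few non-isolated vertices. -/
lemma exists_cover {n s : ℕ} (G : SimpleGraph (Fin n)) (hG : 1 ≤ edgeCount G) (d : ℝ) (hd : 0 < d)
    (hdeg : ∀ u v, G.Adj u v → d ≤ deg G u) (hs : (s : ℝ) = ⌊2 * (edgeCount G : ℝ) / d⌋₊) :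
    ∃ f : Fin s → Fin n, eF G ⊆ Finset.univ.image (fun x : Fin s × Fin s => s(f x.1, f x.2)) := by
  set S : Finset (Fin n) := Finset.univ.filter (fun v => ∃ u, G.Adj v u) with hS
  have hcard : S.card ≤ s := by
    have hs' : s = ⌊2 * (edgeCount G : ℝ) / d⌋₊ := by exact_mod_cast hs
    rw [hs']
    apply Nat.le_floor
    rw [le_div_iff₀ hd]
    have h1 : (S.card : ℝ) * d ≤ ∑ v ∈ S, (deg G v : ℝ) := by
      rw [← nsmul_eq_mul]
      apply Finset.card_nsmul_le_sum
      intro v hv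
      obtain ⟨u, hu⟩ := (Finset.mem_filter.1 hv).2
      exact hdeg v u hu
    have h2 : ∑ v ∈ S, (deg G v : ℝ) ≤ ∑ v, (deg G v : ℝ) :=
      Finset.sum_le_sum_of_subset_of_nonneg (Finset.subset_univ _) (fun _ _ _ => Nat.cast_nonneg _)
    have h3 : ∑ v, (deg G v : ℝ) = 2 * (edgeCount G : ℝ) := by exact_mod_cast sum_deg G
    linarith
  obtain ⟨e, he⟩ : (eF G).Nonempty := Finset.card_pos.1 hG
  have hmem : ∀ a b, s(a, b) ∈ eF G → a ∈ S ∧ b ∈ S := by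
    intro a b hab
    have : G.Adj a b := (mem_eF _ _).1 hab
    exact ⟨Finset.mem_filter.2 ⟨Finset.mem_univ _, b, this⟩,
      Finset.mem_filter.2 ⟨Finset.mem_univ _, a, this.symm⟩⟩
  have hne : Nonempty S := by
    induction e using Sym2.ind with
    | _ a b => exact ⟨⟨a, (hmem a b he).1⟩⟩
  obtain ⟨g⟩ : Nonempty (S ↪ Fin s) := by
    apply Function.Embedding.nonempty_of_card_le
    simpa using hcard
  have hinv := Function.leftInverse_invFun g.injective
  refine ⟨fun i => (Function.invFun g i : S), ?_⟩
  intro e he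
  induction e using Sym2.ind with
  | _ a b =>
    obtain ⟨ha, hb⟩ := hmem a b he
    rw [Finset.mem_image]
    refine ⟨(g ⟨a, ha⟩, g ⟨b, hb⟩), Finset.mem_univ _, ?_⟩
    simp [hinv _]

lemma count_le {n s m : ℕ} (A : Finset (SimpleGraph (Fin n)))
    (hA : ∀ G ∈ A, edgeCount G = m ∧ ∃ f : Fin s → Fin n,
      eF G ⊆ Finset.univ.image (fun x : Fin s × Fin s => s(f x.1, f x.2))) :
    A.card ≤ n ^ s * (s ^ 2).choose m := by
  rw [← Finset.card_image_of_injective A eF_inj]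
  have hsub : A.image eF ⊆ (Finset.univ : Finset (Fin s → Fin n)).biUnion (fun f =>
      Finset.powersetCard m
        (Finset.univ.image (fun x : Fin s × Fin s => s(f x.1, f x.2)))) := by
    intro E hE
    obtain ⟨G, hG, rfl⟩ := Finset.mem_image.1 hE
    obtain ⟨h1, f, h2⟩ := hA G hG
    rw [Finset.mem_biUnion]
    exact ⟨f, Finset.mem_univ _, Finset.mem_powersetCard.2 ⟨h2, h1⟩⟩
  refine (Finset.card_le_card hsub).trans ?_
  refine (Finset.card_biUnion_le_card_mul _ _ ((s ^ 2).choose m) ?_).trans ?_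
  · intro f _
    rw [Finset.card_powersetCard]
    apply Nat.choose_le_choose
    refine Finset.card_image_le.trans ?_
    simp [sq]
  · simp

lemma choose_bound (N m : ℕ) (hm : 1 ≤ m) :
    ((N.choose m : ℕ) : ℝ) ≤ (Real.exp 1 * N / m) ^ m := by
  have hm' : (0:ℝ) < m := by exact_mod_cast hm
  have h1 : ((N.choose m : ℕ) : ℝ) ≤ (N:ℝ) ^ m / (m.factorial : ℝ) := Nat.choose_le_pow_div m N
  have h2 : (m:ℝ) ^ m / (m.factorial : ℝ) ≤ Real.exp m :=
    Real.pow_div_factorial_le_exp (m:ℝ) hm'.le m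
  have hf : (0:ℝ) < m.factorial := by exact_mod_cast m.factorial_pos
  refine h1.trans ?_
  rw [div_pow, mul_pow, ← Real.exp_nat_mul, mul_one, div_le_div_iff₀ hf (by positivity)]
  rw [div_le_iff₀ hf] at h2
  have : (0:ℝ) ≤ (N:ℝ) ^ m := by positivity
  nlinarith

lemma final_count (n m : ℕ) (hn : 1 ≤ n) (hm : 1 ≤ m) (l t : ℝ) (hl : 0 < l) (ht : 0 < t)
    (htl : 2 * l ≤ t) (hln : l < n) (A : Finset (SimpleGraph (Fin n)))
    (hA : ∀ G ∈ A, edgeCount G = m ∧ ∀ e ∈ G.edgeSet,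
      t ≤ condTri n (l / n) G - condTri n (l / n) (G.deleteEdges {e})) :
    (A.card : ℝ) ≤ (1 / (l / n)) ^ ((m : ℝ) * ((1 / Real.log (1 / (l / n))) *
      ((16 * Real.exp 1 / t) * Real.log n + Real.log (16 * Real.exp 1 * m / t ^ 2)))) := by
  have hn' : (0:ℝ) < n := by exact_mod_cast hn
  have hn1 : (1:ℝ) ≤ n := by exact_mod_cast hn
  have hm' : (0:ℝ) < m := by exact_mod_cast hm
  have hp : 0 < l / n := by positivity
  have hp1 : l / n < 1 := by rwa [div_lt_one hn']
  have hL : 0 < Real.log (1 / (l / n)) := Real.log_pos (by rw [lt_div_iff₀ hp]; linarith)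
  have hlogn : 0 ≤ Real.log n := Real.log_nonneg hn1
  set s : ℕ := ⌊2 * (m : ℝ) / (t / 2)⌋₊ with hs
  have hsle : (s : ℝ) ≤ 4 * m / t := by
    have : (s : ℝ) ≤ 2 * (m : ℝ) / (t / 2) := Nat.floor_le (by positivity)
    refine this.trans (le_of_eq ?_)
    field_simp
    norm_num
  have hcount : A.card ≤ n ^ s * (s ^ 2).choose m := by
    apply count_le
    intro G hG
    obtain ⟨h1, h2⟩ := hA G hG
    refine ⟨h1, ?_⟩
    apply exists_cover G (by omega) (t / 2) (by positivity)
    · intro u v huv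
      have h3 := condTri_diff n (l / n) hp hp1.le G u v huv
      have h4 := h2 s(u, v) huv
      rw [mul_div_cancel₀ l hn'.ne'] at h3
      linarith
    · rw [h1]
  have hE : 1 ≤ Real.exp 1 := Real.one_le_exp (by norm_num)
  have hx : 0 < 16 * Real.exp 1 * m / t ^ 2 := by positivity
  have hR : (1 / (l / n)) ^ ((m : ℝ) * ((1 / Real.log (1 / (l / n))) *
      ((16 * Real.exp 1 / t) * Real.log n + Real.log (16 * Real.exp 1 * m / t ^ 2)))) =
      Real.exp (16 * Real.exp 1 * m / t * Real.log n) * (16 * Real.exp 1 * m / t ^ 2) ^ m := by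
    rw [Real.rpow_def_of_pos (by positivity)]
    nth_rewrite 2 [← Real.exp_log hx]
    rw [← Real.exp_nat_mul, ← Real.exp_add]
    congr 1
    generalize Real.log (16 * Real.exp 1 * m / t ^ 2) = y
    have hL0 := hL.ne'
    generalize Real.log (1 / (l / n)) = z at hL0 ⊢
    field_simp
  rw [hR]
  calc (A.card : ℝ) ≤ (n:ℝ) ^ s * ((s ^ 2).choose m : ℕ) := by exact_mod_cast hcount
    _ ≤ _ := by
      apply mul_le_mul _ _ (by positivity) (by positivity)
      · rw [← Real.exp_log hn', ← Real.exp_nat_mul, Real.exp_log hn']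
        apply Real.exp_le_exp.2
        apply mul_le_mul_of_nonneg_right _ hlogn
        refine hsle.trans ?_
        gcongr
        linarith
      · refine (choose_bound _ _ hm).trans ?_
        apply pow_le_pow_left₀ (by positivity)
        have h5 : ((s ^ 2 : ℕ) : ℝ) ≤ (4 * m / t) ^ 2 := by
          push_cast
          exact pow_le_pow_left₀ (by positivity) hsle 2
        calc Real.exp 1 * ((s ^ 2 : ℕ) : ℝ) / m ≤ Real.exp 1 * (4 * m / t) ^ 2 / m := by gcongr
          _ = _ := by field_simp; norm_num

/-- **Bound on the number of `m`-cores.** -/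
theorem core_count_bound (l a C : ℝ) (hl : 0 < l) (ha : 0 < a) (hC : 0 < C)
    (k w : ℕ → ℝ) (hk : ∀ n, 0 < k n) (hw : ∀ n, 0 < w n)
    (h0 : Tendsto (fun n : ℕ => Real.log n / ((w n) ^ 2 * (k n) ^ ((1 : ℝ) / 3)))
      atTop (nhds 0)) :
    ∃ C' : ℝ, 0 < C' ∧ ∃ n₀ : ℕ, ∀ n ≥ n₀, ∀ m : ℕ, 1 ≤ m →
      ((Finset.univ.filter (fun G : SimpleGraph (Fin n) =>
            IsCore n (l / n) a (w n) C (k n) G ∧ edgeCount G = m)).card : ℝ) ≤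
        (1 / (l / n)) ^ ((m : ℝ) *
          ((1 / Real.log (1 / (l / n))) *
            ((C' / ((w n) ^ 2 * (k n) ^ ((1 : ℝ) / 3) / (C * a * Real.log (1 / (l / n))))) *
                Real.log n +
              Real.log (C' * m /
                ((w n) ^ 2 * (k n) ^ ((1 : ℝ) / 3) / (C * a * Real.log (1 / (l / n)))) ^ 2)))) := by
  refine ⟨16 * Real.exp 1, by positivity, ?_⟩
  have hε : (0:ℝ) < 1 / (4 * l * C * a) := by positivity
  have h1 : ∀ᶠ n : ℕ in atTop,
      Real.log n / ((w n) ^ 2 * (k n) ^ ((1 : ℝ) / 3)) < 1 / (4 * l * C * a) :=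
    h0.eventually_lt_const hε
  have h2 : ∀ᶠ n : ℕ in atTop, l < (n:ℝ) := tendsto_natCast_atTop_atTop.eventually_gt_atTop l
  have h3 : ∀ᶠ n : ℕ in atTop, 1 / l < (n:ℝ) :=
    tendsto_natCast_atTop_atTop.eventually_gt_atTop (1 / l)
  obtain ⟨n₀, hn₀⟩ := eventually_atTop.1 ((h1.and h2).and (h3.and (eventually_ge_atTop 1)))
  refine ⟨n₀, fun n hn m hm => ?_⟩
  obtain ⟨⟨g1, g2⟩, g3, g4⟩ := hn₀ n hn
  have hn' : (0:ℝ) < n := by exact_mod_cast g4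
  have hW : 0 < (w n) ^ 2 * (k n) ^ ((1 : ℝ) / 3) :=
    mul_pos (pow_pos (hw n) 2) (Real.rpow_pos_of_pos (hk n) _)
  have hL : 0 < Real.log (1 / (l / n)) := by
    apply Real.log_pos
    rw [one_div_div, lt_div_iff₀ hl]
    linarith
  have hL2 : Real.log (1 / (l / n)) ≤ 2 * Real.log n := by
    have : Real.log (1 / (l / n)) ≤ Real.log ((n:ℝ) ^ 2) := by
      apply Real.log_le_log (by positivity)
      rw [one_div_div, div_le_iff₀ hl]
      rw [div_lt_iff₀ hl] at g3
      nlinarith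
    rwa [Real.log_pow] at this
  have hden : 0 < C * a * Real.log (1 / (l / n)) := by positivity
  apply final_count n m g4 hm l _ hl (div_pos hW hden) _ g2
  · intro G hG
    obtain ⟨hc, he⟩ := (Finset.mem_filter.1 hG).2
    exact ⟨he, hc.2.2⟩
  · rw [le_div_iff₀ hden]
    rw [div_lt_div_iff₀ hW (by positivity)] at g1
    have : 0 < l * C * a := by positivity
    nlinarith
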